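/- There is a homeomorphism from 𝓜_Ω to 𝒲_Ω. Concretely, for μ a probability measure on Σ_Ω choose a measurable φ:[0,1)→Σ_Ω with μ = φ(λ) (the pushforward of Lebesgue measure) and set w_μ(x,y) = (φ(x))(y); then the map sending the cut□-equivalence class of μ to the δ_□-equivalence class of w_μ is a well-defined homeomorphism 𝓜_Ω → 𝒲_Ω. -/

import Mathlib

open MeasureTheory Set Filter Topology

noncomputable section

namespace Paper

/-- Lebesgue measure restricted to `[0,1)`, representing the unit interval. -/
def lam01 : Measure ℝ := volume.restrict (Set.Ico (0:ℝ) 1)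

instance : IsProbabilityMeasure lam01 :=
  ⟨by simp [lam01, Real.volume_Ico]⟩

variable (Ω : Type) [Fintype Ω]

/-- The simplex `P(Ω) ⊆ ℝ^Ω` of probability vectors. -/
def simplex : Set (Ω → ℝ) := {p | (∀ ω, 0 ≤ p ω) ∧ ∑ ω, p ω = 1}

/-- `Σ_Ω = L¹([0,1), P(Ω))`: elements of `L¹([0,1), ℝ^Ω)` taking values in the simplex a.e. -/
def SigmaSp := {f : MeasureTheory.Lp (Ω → ℝ) 1 lam01 // ∀ᵐ x ∂lam01, f x ∈ simplex Ω}

instance : TopologicalSpace (SigmaSp Ω) := by unfold SigmaSp; infer_instance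
instance : MeasurableSpace (SigmaSp Ω) := borel _
instance : BorelSpace (SigmaSp Ω) := ⟨rfl⟩

/-- Evaluation of (a representative of) an element of `Σ_Ω`. -/
def ev (f : SigmaSp Ω) (x : ℝ) : Ω → ℝ := f.1 x

/-- Probability measures on `Σ_Ω`. -/
abbrev PM := ProbabilityMeasure (SigmaSp Ω)

/-- `γ` is a coupling of `μ` and `ν`. -/
def IsCoupling (μ ν : PM Ω) (γ : Measure (SigmaSp Ω × SigmaSp Ω)) : Prop :=
  γ.map Prod.fst = (μ : Measure (SigmaSp Ω)) ∧ γ.map Prod.snd = (ν : Measure (SigmaSp Ω))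

/-- Total variation norm of a vector in `ℝ^Ω`. -/
def tv (v : Ω → ℝ) : ℝ := (∑ ω, |v ω|) / 2

/-- The inner `sup` of the cut metric, for a given coupling `γ` and rearrangement `s`. -/
def cutPair (γ : Measure (SigmaSp Ω × SigmaSp Ω)) (s : ℝ → ℝ) : ℝ :=
  ⨆ (B : Set (SigmaSp Ω × SigmaSp Ω)) (_ : MeasurableSet B) (U : Set ℝ) (_ : MeasurableSet U),
    tv Ω (fun ω => ∫ p in B, (∫ x in U, (ev Ω p.1 x ω - ev Ω p.2 (s x) ω) ∂lam01) ∂γ)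

/-- The strong cut metric `Cut□`. -/
def CutD (μ ν : PM Ω) : ℝ := ⨅ (γ : {γ // IsCoupling Ω μ ν γ}), cutPair Ω γ.1 id

/-- `S_{[0,1)}`: Lebesgue-measure-preserving measurable self-maps of `[0,1)`. -/
def IsMPS (s : ℝ → ℝ) : Prop :=
  MeasurePreserving s lam01 lam01 ∧ MapsTo s (Ico (0:ℝ) 1) (Ico (0:ℝ) 1)

/-- The weak cut metric `cut□`. -/
def cutd (μ ν : PM Ω) : ℝ :=
  ⨅ (γ : {γ // IsCoupling Ω μ ν γ}) (s : {s // IsMPS s}), cutPair Ω γ.1 s.1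


/-- A (decorated, bipartite) graphon: a measurable map `[0,1)² → P(Ω)`, coded as a function
`ℝ → ℝ → Ω → ℝ` that is measurable and takes values in the simplex on `[0,1)²`. -/
def IsGraphon (g : ℝ → ℝ → Ω → ℝ) : Prop :=
  Measurable (Function.uncurry g) ∧
    ∀ x ∈ Ico (0:ℝ) 1, ∀ y ∈ Ico (0:ℝ) 1, g x y ∈ simplex Ω

/-- The cut distance `δ_□` on graphons. -/
def deltaBox (f g : ℝ → ℝ → Ω → ℝ) : ℝ :=
  ⨅ (s : {s // IsMPS s}) (t : {t // IsMPS t}),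
    ⨆ (U : Set ℝ) (_ : MeasurableSet U) (V : Set ℝ) (_ : MeasurableSet V),
      tv Ω (fun ω => ∫ x in U, (∫ y in V, (f x y ω - g (s.1 x) (t.1 y) ω) ∂lam01) ∂lam01)

/-- `φ : [0,1) → Σ_Ω` is a representative of `μ ∈ P(Σ_Ω)` if it is measurable and pushes the
Lebesgue measure on `[0,1)` forward to `μ`. -/
def IsRep (μ : PM Ω) (φ : ℝ → SigmaSp Ω) : Prop :=
  Measurable φ ∧ lam01.map φ = (μ : Measure (SigmaSp Ω))

/-- The graphon `w_μ(x,y) = (φ(x))(y)` associated with a representative `φ` of `μ`. -/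
def graphonOf (φ : ℝ → SigmaSp Ω) : ℝ → ℝ → Ω → ℝ := fun x y => ev Ω (φ x) y

variable {Ω}

/-!
Pushing `λ` forward under `x ↦ (φ x, ξ (s x))` turns a rearrangement `s` into a coupling of `μ` and
`ν`, and the cut norm does not change: a set that is not a preimage can be replaced by one that is,
since the total variation of an integral is a maximum of linear functionals. Hence
`cut□(μ, ν) ≤ δ_□(w_μ, w_ν)`. Conversely, every coupling `γ` is `λ` transported by some `Ψ`; as `λ`
has no atoms, `Ψ` can be chosen so that its first component is within `ε` of `φ`, and its second
within `ε` of a rearrangement of `ξ`, after discretising `Σ_Ω` into countably many sets of diameter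
`ε`. So `μ ↦ w_μ` is an isometry, and it is onto because graphons have measurable sections in `L¹`.
-/

section Transport

open ProbabilityTheory

theorem continuous_cdf (α : Measure ℝ) [IsProbabilityMeasure α] [NullSingletonClass α] :
    Continuous (cdf α) := by
  refine continuous_iff_continuousAt.2 fun x => ?_
  rw [(monotone_cdf α).continuousAt_iff_leftLim_eq_rightLim, StieltjesFunction.rightLim_eq]
  have hjump : ENNReal.ofReal (cdf α x - Function.leftLim (cdf α) x) = 0 := by
    rw [← StieltjesFunction.measure_singleton, measure_cdf, measure_singleton]
  have := ENNReal.ofReal_eq_zero.1 hjump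
  exact le_antisymm ((monotone_cdf α).leftLim_le le_rfl) (by linarith)

theorem measure_setOf_cdf_le (α : Measure ℝ) [IsProbabilityMeasure α] [NullSingletonClass α]
    {t : ℝ} (h0 : 0 ≤ t) (h1 : t ≤ 1) : α {x | cdf α x ≤ t} = ENNReal.ofReal t := by
  have hcont := continuous_cdf α
  rcases h1.eq_or_lt with rfl | h1
  · simp [cdf_le_one]
  obtain ⟨c, hc⟩ := ((tendsto_cdf_atTop α).eventually_const_lt h1).exists
  rcases {x | cdf α x ≤ t}.eq_empty_or_nonempty with hempty | hne
  · have ht : t ≤ 0 := ge_of_tendsto (tendsto_cdf_atBot α) <| .of_forall fun x =>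
      (not_le.1 fun hx => (hempty ▸ hx : x ∈ (∅ : Set ℝ))).le
    simp [hempty, ENNReal.ofReal_of_nonpos ht]
  obtain ⟨a, ha⟩ := mem_range_of_exists_le_of_exists_ge hcont hne ⟨c, hc.le⟩
  have hbdd : BddAbove {x | cdf α x ≤ t} :=
    ⟨c, fun x hx => le_of_not_gt fun hcx => (hc.trans_le (monotone_cdf α hcx.le)).not_ge hx⟩
  set b := sSup {x | cdf α x ≤ t}
  have hb : cdf α b ≤ t := (isClosed_le hcont continuous_const).csSup_mem hne hbdd
  have hbt : cdf α b = t := hb.antisymm (ha ▸ monotone_cdf α (le_csSup hbdd ha.le))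
  have hIic : {x | cdf α x ≤ t} = Iic b :=
    Subset.antisymm (fun _ hx => le_csSup hbdd hx) fun _ hx => (monotone_cdf α hx).trans hb
  rw [hIic, ← ofReal_cdf, hbt]

variable {X Y Z ι : Type*} [MeasurableSpace X] [MeasurableSpace Y]

theorem nullSingletonClass_map [MeasurableSingletonClass Y] {f : X → Y} (hf : Measurable f)
    (hinj : Function.Injective f) (α : Measure X) [NullSingletonClass α] :
    NullSingletonClass (α.map f) where
  measure_singleton y := by
    rw [Measure.map_apply hf (measurableSet_singleton y)]
    exact (subsingleton_singleton.preimage hinj).measure_zero α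

theorem exists_measurePreserving_unitInterval [StandardBorelSpace X] (α : Measure X)
    [IsProbabilityMeasure α] [NullSingletonClass α] :
    ∃ f : X → unitInterval, MeasurePreserving f α volume := by
  have hemb := measurableEmbedding_embeddingReal X
  have := nullSingletonClass_map hemb.measurable hemb.injective α
  have := Measure.isProbabilityMeasure_map (μ := α) hemb.measurable.aemeasurable
  set α' := α.map (embeddingReal X)
  let F : ℝ → unitInterval := fun x => ⟨cdf α' x, cdf_nonneg α' x, cdf_le_one α' x⟩
  have hF : Measurable F := ((continuous_cdf α').subtype_mk _).measurable
  have := Measure.isProbabilityMeasure_map (μ := α') hF.aemeasurable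
  have hmap : α'.map F = volume := by
    refine Measure.ext_of_Iic _ _ fun t => ?_
    rw [Measure.map_apply hF measurableSet_Iic, unitInterval.volume_Iic]
    exact measure_setOf_cdf_le α' t.2.1 t.2.2
  exact ⟨F ∘ embeddingReal X, MeasurePreserving.comp ⟨hF, hmap⟩ ⟨hemb.measurable, rfl⟩⟩

theorem exists_measurePreserving_of_measure_univ_eq [StandardBorelSpace X] [StandardBorelSpace Y]
    [Nonempty Y] (α : Measure X) [IsFiniteMeasure α] [NullSingletonClass α] (β : Measure Y)
    (h : α univ = β univ) : ∃ s : X → Y, MeasurePreserving s α β := by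
  rcases eq_or_ne (α univ) 0 with h0 | h0
  · obtain rfl := Measure.measure_univ_eq_zero.1 h0
    obtain rfl := Measure.measure_univ_eq_zero.1 (h ▸ h0)
    exact ⟨fun _ => Classical.arbitrary Y, measurable_const, by simp⟩
  have htop := measure_ne_top α univ
  have hinv : (α univ)⁻¹ * α univ = 1 := ENNReal.inv_mul_cancel h0 htop
  have : IsProbabilityMeasure ((α univ)⁻¹ • α) := ⟨by simpa using hinv⟩
  have : IsProbabilityMeasure ((α univ)⁻¹ • β) := ⟨by simpa [← h] using hinv⟩
  have : NullSingletonClass ((α univ)⁻¹ • α) := ⟨fun x => by simp⟩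
  obtain ⟨f, hf⟩ := exists_measurePreserving_unitInterval ((α univ)⁻¹ • α)
  obtain ⟨g, hg, hgmap⟩ := ((α univ)⁻¹ • β).exists_measurable_map_eq
  have hs := (MeasurePreserving.comp ⟨hg, hgmap⟩ hf).smul_measure (α univ)
  simp only [smul_smul, ENNReal.mul_inv_cancel h0 htop, one_smul] at hs
  exact ⟨g ∘ f, hs⟩

section Fibres

variable [Countable ι] [MeasurableSpace ι] [MeasurableSingletonClass ι]

theorem sum_restrict_preimage_singleton {f : X → ι} (hf : Measurable f) (α : Measure X) :
    Measure.sum (fun i => α.restrict (f ⁻¹' {i})) = α := by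
  rw [← Measure.restrict_iUnion
    (fun i j hij => (disjoint_singleton.2 hij).preimage f)
    (fun i => hf (measurableSet_singleton i)), ← preimage_iUnion, iUnion_of_singleton,
    preimage_univ, Measure.restrict_univ]

theorem exists_measurePreserving_comp_ae_eq [StandardBorelSpace X] [StandardBorelSpace Y]
    [Nonempty Y] {α : Measure X} [IsFiniteMeasure α] [NullSingletonClass α] {β : Measure Y}
    {f : X → ι} {g : Y → ι} (hf : Measurable f) (hg : Measurable g) (h : α.map f = β.map g) :
    ∃ s : X → Y, MeasurePreserving s α β ∧ g ∘ s =ᵐ[α] f := by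
  have hfib (i : ι) : ∃ s : X → Y,
      MeasurePreserving s (α.restrict (f ⁻¹' {i})) (β.restrict (g ⁻¹' {i})) := by
    refine exists_measurePreserving_of_measure_univ_eq _ _ ?_
    simp only [Measure.restrict_apply_univ, ← Measure.map_apply hf (measurableSet_singleton i),
      ← Measure.map_apply hg (measurableSet_singleton i), h]
  choose s hs using hfib
  have hglue : Measurable fun x => s (f x) x :=
    (measurable_from_prod_countable_right (f := fun p : ι × X => s p.1 p.2)
      fun i => (hs i).measurable).comp (hf.prodMk measurable_id)
  have hfibre (i : ι) : ∀ᵐ x ∂α.restrict (f ⁻¹' {i}), f x = i :=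
    ae_restrict_mem (hf (measurableSet_singleton i))
  have hmap (i : ι) : (α.restrict (f ⁻¹' {i})).map (fun x => s (f x) x) =
      β.restrict (g ⁻¹' {i}) := by
    rw [← (hs i).map_eq]
    exact Measure.map_congr ((hfibre i).mono fun x hx => congrArg (s · x) hx)
  refine ⟨fun x => s (f x) x, ⟨hglue, ?_⟩, ?_⟩
  · calc α.map (fun x => s (f x) x)
        = Measure.sum fun i => (α.restrict (f ⁻¹' {i})).map fun x => s (f x) x := by
          rw [← Measure.map_sum hglue.aemeasurable,
            sum_restrict_preimage_singleton hf]
      _ = β := by simp only [hmap, sum_restrict_preimage_singleton hg]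
  · rw [← sum_restrict_preimage_singleton hf α, EventuallyEq,
      Measure.ae_sum_iff]
    intro i
    have hgs : ∀ᵐ x ∂α.restrict (f ⁻¹' {i}), g (s i x) = i :=
      (hs i).quasiMeasurePreserving.ae (ae_restrict_mem (hg (measurableSet_singleton i)))
    filter_upwards [hfibre i, hgs] with x hx hgx
    simp only [Function.comp_apply, hx, hgx]

end Fibres

theorem exists_measurable_nat_dist_lt [PseudoMetricSpace Z] [SecondCountableTopology Z]
    [Nonempty Z] [MeasurableSpace Z] [OpensMeasurableSpace Z] {ε : ℝ} (hε : 0 < ε) :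
    ∃ c : Z → ℕ, Measurable c ∧ ∀ z w, c z = c w → dist z w < ε := by
  classical
  have hnear (z : Z) : ∃ n, dist z (TopologicalSpace.denseSeq Z n) < ε / 2 :=
    (TopologicalSpace.denseRange_denseSeq Z).exists_dist_lt z (half_pos hε)
  refine ⟨fun z => Nat.find (hnear z),
    measurable_find _ fun n => measurableSet_lt (by fun_prop) measurable_const, fun z w hzw => ?_⟩
  have hz := Nat.find_spec (hnear z)
  have hw := Nat.find_spec (hnear w)
  rw [show Nat.find (hnear w) = Nat.find (hnear z) from hzw.symm] at hw
  calc dist z w ≤ _ := dist_triangle_right z w _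
    _ < ε / 2 + ε / 2 := add_lt_add hz hw
    _ = ε := add_halves ε

theorem exists_measurePreserving_dist_lt [StandardBorelSpace X] [StandardBorelSpace Y]
    [Nonempty Y] [PseudoMetricSpace Z] [SecondCountableTopology Z] [MeasurableSpace Z]
    [OpensMeasurableSpace Z] {α : Measure X} [IsFiniteMeasure α] [NullSingletonClass α]
    {β : Measure Y} {φ : X → Z} {ψ : Y → Z} (hφ : Measurable φ) (hψ : Measurable ψ)
    (h : α.map φ = β.map ψ) {ε : ℝ} (hε : 0 < ε) :
    ∃ s : X → Y, MeasurePreserving s α β ∧ ∀ᵐ x ∂α, dist (φ x) (ψ (s x)) < ε := by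
  have : Nonempty Z := .map ψ inferInstance
  obtain ⟨c, hc, hdist⟩ := exists_measurable_nat_dist_lt (Z := Z) hε
  obtain ⟨s, hs, hlabel⟩ := exists_measurePreserving_comp_ae_eq (hc.comp hφ) (hc.comp hψ)
    (by rw [← Measure.map_map hc hφ, ← Measure.map_map hc hψ, h])
  exact ⟨s, hs, hlabel.mono fun x hx => hdist _ _ hx.symm⟩

theorem exists_measurePreserving_coupling_dist_lt {W : Type*} [StandardBorelSpace X]
    [StandardBorelSpace Y] [Nonempty Y] [Nonempty Z]
    [PseudoMetricSpace Z] [SecondCountableTopology Z] [MeasurableSpace Z] [OpensMeasurableSpace Z]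
    [StandardBorelSpace Z]
    [PseudoMetricSpace W] [SecondCountableTopology W] [MeasurableSpace W] [OpensMeasurableSpace W]
    [StandardBorelSpace W]
    {α : Measure X} [IsFiniteMeasure α] [NullSingletonClass α] {β : Measure Y}
    {γ : Measure (Z × W)} {φ : X → Z} {ξ : Y → W} (hφ : Measurable φ) (hξ : Measurable ξ)
    (hfst : γ.map Prod.fst = α.map φ) (hsnd : γ.map Prod.snd = β.map ξ) {ε : ℝ} (hε : 0 < ε) :
    ∃ (Ψ : X → Z × W) (s : X → Y), MeasurePreserving Ψ α γ ∧ MeasurePreserving s α β ∧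
      ∀ᵐ x ∂α, dist (φ x, ξ (s x)) (Ψ x) < ε := by
  have : Nonempty W := .map ξ inferInstance
  obtain ⟨Ψ, hΨ, hΨφ⟩ := exists_measurePreserving_dist_lt hφ measurable_fst hfst.symm hε
  have hlaw : α.map (Prod.snd ∘ Ψ) = β.map ξ := by
    rw [← Measure.map_map measurable_snd hΨ.measurable, hΨ.map_eq, hsnd]
  obtain ⟨s, hs, hsξ⟩ :=
    exists_measurePreserving_dist_lt (measurable_snd.comp hΨ.measurable) hξ hlaw hε
  refine ⟨Ψ, s, hΨ, hs, ?_⟩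
  filter_upwards [hΨφ, hsξ] with x hφx hξx
  exact max_lt hφx (dist_comm (ξ (s x)) _ ▸ hξx)

end Transport

section CutNorm

variable {X Y Z : Type*} [MeasurableSpace X] [MeasurableSpace Y] [MeasurableSpace Z]

theorem le_biSup_of_forall_le {ι : Type*} {p : ι → Prop} {f : ι → ℝ} {c : ℝ} (hc : 0 ≤ c)
    (hf : ∀ i, p i → f i ≤ c) {i : ι} (hi : p i) : f i ≤ ⨆ (i) (_ : p i), f i :=
  le_ciSup_of_le ⟨c, forall_mem_range.2 fun j => Real.iSup_le (hf j) hc⟩ i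
    (ciSup_pos (f := fun _ => f i) hi).ge

theorem ciInf₂_le_of_nonneg {ι κ : Type*} {f : ι → κ → ℝ} (hf : ∀ i j, 0 ≤ f i j) (i : ι) (j : κ) :
    ⨅ i, ⨅ j, f i j ≤ f i j :=
  ciInf_le_of_le ⟨0, forall_mem_range.2 fun i => Real.iInf_nonneg (hf i)⟩ i
    (ciInf_le ⟨0, forall_mem_range.2 (hf i)⟩ j)

theorem tv_nonneg (v : Ω → ℝ) : 0 ≤ tv Ω v := by
  unfold tv; positivity

theorem tv_le_of_forall_abs_le {v : Ω → ℝ} {c : ℝ} (h : ∀ ω, |v ω| ≤ c) :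
    tv Ω v ≤ Fintype.card Ω * c / 2 := by
  have : ∑ ω, |v ω| ≤ Fintype.card Ω * c := by
    simpa using Finset.sum_le_card_nsmul Finset.univ _ c fun ω _ => h ω
  unfold tv; gcongr

theorem tv_le_add_tv_sub (v w : Ω → ℝ) : tv Ω v ≤ tv Ω w + tv Ω (v - w) := by
  unfold tv
  rw [← add_div, ← Finset.sum_add_distrib]
  gcongr with ω
  simpa using abs_add_le (w ω) ((v - w) ω)

theorem sum_abs_eq_sum_sign_mul (v : Ω → ℝ) : ∑ ω, |v ω| = ∑ ω, SignType.sign (v ω) * v ω :=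
  Finset.sum_congr rfl fun ω _ => (sign_mul_self (v ω)).symm

theorem sum_sign_mul_le_sum_abs (v w : Ω → ℝ) :
    ∑ ω, SignType.sign (v ω) * w ω ≤ ∑ ω, |w ω| := by
  refine Finset.sum_le_sum fun ω _ => ?_
  rcases lt_trichotomy (v ω) 0 with h | h | h <;> simp [h, neg_le_abs, le_abs_self]

theorem setIntegral_comp_le_setIntegral_nonneg {m : Measure X} {m' : Measure Z} {Ψ : X → Z}
    (hΨ : MeasurePreserving Ψ m m') {k : Z → ℝ} (hk : Measurable k) (hint : Integrable k m')
    {U : Set X} (hU : MeasurableSet U) :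
    ∫ x in U, k (Ψ x) ∂m ≤ ∫ z in {z | 0 ≤ k z}, k z ∂m' := by
  have hpos : MeasurableSet {z | 0 ≤ k z} := measurableSet_le measurable_const hk
  calc ∫ x in U, k (Ψ x) ∂m
      ≤ ∫ x in Ψ ⁻¹' {z | 0 ≤ k z}, k (Ψ x) ∂m :=
        setIntegral_le_nonneg hU (hk.comp hΨ.measurable).stronglyMeasurable
          (hΨ.integrable_comp_of_integrable hint)
    _ = ∫ z in {z | 0 ≤ k z}, k z ∂m' := by
        rw [← hΨ.map_eq, setIntegral_map hpos hk.aestronglyMeasurable hΨ.aemeasurable]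

/-- With `ε ω` the signs of the integrals over `U`, the preimage of `{∑ ω, ε ω * k ω ≥ 0}` does at
least as well as `U`. -/
theorem exists_tv_setIntegral_comp_le {m : Measure X} {m' : Measure Z} {Ψ : X → Z}
    (hΨ : MeasurePreserving Ψ m m') {k : Ω → Z → ℝ} (hk : ∀ ω, Measurable (k ω))
    (hint : ∀ ω, Integrable (k ω) m') {U : Set X} (hU : MeasurableSet U) :
    ∃ B, MeasurableSet B ∧
      tv Ω (fun ω => ∫ x in U, k ω (Ψ x) ∂m) ≤ tv Ω (fun ω => ∫ z in B, k ω z ∂m') := by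
  set v : Ω → ℝ := fun ω => ∫ x in U, k ω (Ψ x) ∂m with hv
  let e : Ω → ℝ := fun ω => SignType.sign (v ω)
  let g : Z → ℝ := fun z => ∑ ω, e ω * k ω z
  have hg : Measurable g := Finset.measurable_fun_sum _ fun ω _ => (hk ω).const_mul _
  have hgint : Integrable g m' := integrable_finsetSum _ fun ω _ => (hint ω).const_mul _
  have hkΨ (ω : Ω) : Integrable (fun x => k ω (Ψ x)) m :=
    hΨ.integrable_comp_of_integrable (hint ω)
  refine ⟨{z | 0 ≤ g z}, measurableSet_le measurable_const hg, ?_⟩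
  refine div_le_div_of_nonneg_right ?_ zero_le_two
  calc ∑ ω, |v ω| = ∑ ω, e ω * v ω := sum_abs_eq_sum_sign_mul v
    _ = ∫ x in U, g (Ψ x) ∂m := by
        simp only [g, hv, ← integral_const_mul]
        exact (integral_finsetSum _ fun ω _ => ((hkΨ ω).const_mul _).integrableOn).symm
    _ ≤ ∫ z in {z | 0 ≤ g z}, g z ∂m' := setIntegral_comp_le_setIntegral_nonneg hΨ hg hgint hU
    _ = ∑ ω, e ω * ∫ z in {z | 0 ≤ g z}, k ω z ∂m' := by
        simp only [← integral_const_mul]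
        exact integral_finsetSum _ fun ω _ => ((hint ω).const_mul _).integrableOn
    _ ≤ ∑ ω, |∫ z in {z | 0 ≤ g z}, k ω z ∂m'| := sum_sign_mul_le_sum_abs v _

/-- The cut norm of a kernel `h` with values in `ℝ^Ω`: the common form of the suprema defining
`cutPair` and `deltaBox`. -/
def cutNorm (m : Measure X) (n : Measure Y) (h : X → Y → Ω → ℝ) : ℝ :=
  ⨆ (B : Set X) (_ : MeasurableSet B) (V : Set Y) (_ : MeasurableSet V),
    tv Ω (fun ω => ∫ x in B, (∫ y in V, h x y ω ∂n) ∂m)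

/-- The regularity under which the suprema in `cutNorm` are taken over bounded families (an
unbounded real supremum is `0`). It is phrased through partial integrals over the second variable
because the elements of `Σ_Ω` are almost everywhere classes in that variable. -/
structure IsBoundedKernel {κ : Type*} (n : Measure Y) (h : X → Y → κ → ℝ) : Prop where
  measurable_setIntegral : ∀ V ω, Measurable fun x => ∫ y in V, h x y ω ∂n
  exists_bound : ∃ C, ∀ V ω x, |∫ y in V, h x y ω ∂n| ≤ C

namespace IsBoundedKernel

variable {κ : Type*} {n : Measure Y} {h : Z → Y → κ → ℝ}

theorem comp (hh : IsBoundedKernel n h) {Ψ : X → Z} (hΨ : Measurable Ψ) :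
    IsBoundedKernel n fun x => h (Ψ x) where
  measurable_setIntegral V ω := (hh.measurable_setIntegral V ω).comp hΨ
  exists_bound := hh.exists_bound.imp fun _ hC V ω x => hC V ω (Ψ x)

theorem integrable_setIntegral (hh : IsBoundedKernel n h) (m : Measure Z) [IsFiniteMeasure m]
    (V : Set Y) (ω : κ) : Integrable (fun z => ∫ y in V, h z y ω ∂n) m := by
  obtain ⟨C, hC⟩ := hh.exists_bound
  exact .of_bound (hh.measurable_setIntegral V ω).aestronglyMeasurable C
    (.of_forall fun z => hC V ω z)

end IsBoundedKernel

theorem cutNorm_nonneg (m : Measure X) (n : Measure Y) (h : X → Y → Ω → ℝ) :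
    0 ≤ cutNorm m n h :=
  Real.iSup_nonneg fun _ => Real.iSup_nonneg fun _ => Real.iSup_nonneg fun _ =>
    Real.iSup_nonneg fun _ => tv_nonneg _

theorem cutNorm_le {m : Measure X} {n : Measure Y} {h : X → Y → Ω → ℝ} {c : ℝ} (hc : 0 ≤ c)
    (hle : ∀ B V, MeasurableSet B → MeasurableSet V →
      tv Ω (fun ω => ∫ x in B, (∫ y in V, h x y ω ∂n) ∂m) ≤ c) : cutNorm m n h ≤ c :=
  Real.iSup_le (fun B => Real.iSup_le (fun hB => Real.iSup_le (fun V =>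
    Real.iSup_le (fun hV => hle B V hB hV) hc) hc) hc) hc

theorem abs_setIntegral_le_mul_univ {m : Measure X} [IsFiniteMeasure m] {k : X → ℝ} {c : ℝ}
    (hc : 0 ≤ c) (hk : ∀ᵐ x ∂m, |k x| ≤ c) (B : Set X) :
    |∫ x in B, k x ∂m| ≤ c * m.real univ :=
  calc |∫ x in B, k x ∂m| ≤ c * m.real B :=
        norm_setIntegral_le_of_norm_le_const_ae' (f := k) (measure_lt_top m B)
          (hk.mono fun _ hx _ => hx)
    _ ≤ c * m.real univ := mul_le_mul_of_nonneg_left (measureReal_mono (subset_univ B)) hc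

theorem tv_le_cutNorm {m : Measure X} [IsFiniteMeasure m] {n : Measure Y} {h : X → Y → Ω → ℝ}
    (hh : IsBoundedKernel n h) {B : Set X} (hB : MeasurableSet B) {V : Set Y}
    (hV : MeasurableSet V) :
    tv Ω (fun ω => ∫ x in B, (∫ y in V, h x y ω ∂n) ∂m) ≤ cutNorm m n h := by
  obtain ⟨C, hC⟩ := hh.exists_bound
  set c : ℝ := Fintype.card Ω * (|C| * m.real univ) / 2
  have hc : 0 ≤ c := by positivity
  have hbound (B : Set X) (V : Set Y) :
      tv Ω (fun ω => ∫ x in B, (∫ y in V, h x y ω ∂n) ∂m) ≤ c :=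
    tv_le_of_forall_abs_le fun ω => abs_setIntegral_le_mul_univ (abs_nonneg C)
      (.of_forall fun x => (hC V ω x).trans (le_abs_self C)) B
  calc tv Ω (fun ω => ∫ x in B, (∫ y in V, h x y ω ∂n) ∂m)
      ≤ ⨆ (V : Set Y) (_ : MeasurableSet V),
          tv Ω (fun ω => ∫ x in B, (∫ y in V, h x y ω ∂n) ∂m) :=
        le_biSup_of_forall_le hc (fun V _ => hbound B V) hV
    _ ≤ cutNorm m n h :=
        le_biSup_of_forall_le
          (f := fun B => ⨆ (V : Set Y) (_ : MeasurableSet V),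
            tv Ω (fun ω => ∫ x in B, (∫ y in V, h x y ω ∂n) ∂m)) hc
          (fun B _ => Real.iSup_le (fun V => Real.iSup_le (fun _ => hbound B V) hc) hc) hB

theorem cutNorm_comp {m : Measure X} [IsFiniteMeasure m] {m' : Measure Z} {n : Measure Y}
    {Ψ : X → Z} (hΨ : MeasurePreserving Ψ m m') {h : Z → Y → Ω → ℝ} (hh : IsBoundedKernel n h) :
    cutNorm m n (fun x => h (Ψ x)) = cutNorm m' n h := by
  have : IsFiniteMeasure m' := hΨ.map_eq ▸ inferInstance
  refine le_antisymm (cutNorm_le (cutNorm_nonneg _ _ _) fun U V hU hV => ?_)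
    (cutNorm_le (cutNorm_nonneg _ _ _) fun B V hB hV => ?_)
  · obtain ⟨B, hB, hle⟩ := exists_tv_setIntegral_comp_le hΨ (hh.measurable_setIntegral V)
      (hh.integrable_setIntegral m' V) hU
    exact hle.trans (tv_le_cutNorm hh hB hV)
  · simp only [← hΨ.map_eq, setIntegral_map hB
      (hh.measurable_setIntegral V _).aestronglyMeasurable hΨ.aemeasurable]
    exact tv_le_cutNorm (hh.comp hΨ.measurable) (hΨ.measurable hB) hV

theorem cutNorm_le_add {m : Measure X} [IsFiniteMeasure m] {n : Measure Y}
    {h h' : X → Y → Ω → ℝ} (hh : IsBoundedKernel n h) (hh' : IsBoundedKernel n h') {c : ℝ}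
    (hc : 0 ≤ c)
    (hclose : ∀ᵐ x ∂m, ∀ V ω, |(∫ y in V, h x y ω ∂n) - ∫ y in V, h' x y ω ∂n| ≤ c) :
    cutNorm m n h ≤ cutNorm m n h' + Fintype.card Ω * (c * m.real univ) / 2 := by
  refine cutNorm_le (add_nonneg (cutNorm_nonneg _ _ _) (by positivity)) fun B V hB hV => ?_
  refine (tv_le_add_tv_sub _ _).trans (add_le_add (tv_le_cutNorm hh' hB hV)
    (tv_le_of_forall_abs_le fun ω => ?_))
  rw [Pi.sub_apply, ← integral_sub (hh.integrable_setIntegral m V ω).integrableOn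
    (hh'.integrable_setIntegral m V ω).integrableOn]
  exact abs_setIntegral_le_mul_univ hc (hclose.mono fun x hx => hx V ω) B

end CutNorm

section SigmaSp

theorem isClosed_setOf_ae_mem {X E : Type*} [MeasurableSpace X] [NormedAddCommGroup E]
    {p : ENNReal} [Fact (1 ≤ p)] (μ : Measure X) {C : Set E} (hC : IsClosed C) :
    IsClosed {f : Lp E p μ | ∀ᵐ x ∂μ, f x ∈ C} := by
  refine isSeqClosed_iff_isClosed.1 fun u f hu hf => ?_
  obtain ⟨ns, -, hns⟩ := (tendstoInMeasure_of_tendsto_Lp hf).exists_seq_tendsto_ae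
  filter_upwards [hns, ae_all_iff.2 hu] with x hlim hmem
  exact hC.mem_of_tendsto hlim (.of_forall fun n => hmem (ns n))

theorem abs_le_one_of_mem_simplex {v : Ω → ℝ} (hv : v ∈ simplex Ω) (ω : Ω) : |v ω| ≤ 1 := by
  obtain ⟨h0, h1⟩ := mem_Icc_of_mem_stdSimplex hv ω
  rwa [abs_of_nonneg h0]

instance : NullSingletonClass lam01 := by unfold lam01; infer_instance

instance : PolishSpace (SigmaSp Ω) :=
  have : Fact ((1 : ENNReal) ≠ ⊤) := ⟨ENNReal.one_ne_top⟩
  (isClosed_setOf_ae_mem lam01 (isClosed_stdSimplex ℝ Ω)).polishSpace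

/-- The `L¹` metric on `Σ_Ω`; `replaceTopology` keeps the topology already present. -/
instance : PseudoMetricSpace (SigmaSp Ω) :=
  (inferInstance : PseudoMetricSpace
    {f : Lp (Ω → ℝ) 1 lam01 // ∀ᵐ x ∂lam01, f x ∈ simplex Ω}).replaceTopology rfl

theorem dist_eq_integral_dist_ev (σ τ : SigmaSp Ω) :
    dist σ τ = ∫ x, dist (ev Ω σ x) (ev Ω τ x) ∂lam01 :=
  L1.dist_eq_integral_dist σ.1 τ.1

theorem integrable_ev (σ : SigmaSp Ω) : Integrable (ev Ω σ) lam01 :=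
  L1.integrable_coeFn σ.1

section MeasurePreserving

variable {s : ℝ → ℝ} (hs : MeasurePreserving s lam01 lam01)
include hs

theorem integrable_ev_comp (σ : SigmaSp Ω) (ω : Ω) :
    Integrable (fun x => ev Ω σ (s x) ω) lam01 :=
  hs.integrable_comp_of_integrable ((integrable_ev σ).eval ω)

theorem abs_setIntegral_ev_comp_le_one (σ : SigmaSp Ω) (U : Set ℝ) (ω : Ω) :
    |∫ x in U, ev Ω σ (s x) ω ∂lam01| ≤ 1 := by
  have hle : ∀ᵐ x ∂lam01, |ev Ω σ (s x) ω| ≤ 1 :=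
    (hs.quasiMeasurePreserving.ae σ.2).mono fun x hx => abs_le_one_of_mem_simplex hx ω
  simpa using abs_setIntegral_le_mul_univ zero_le_one hle U

theorem abs_setIntegral_ev_comp_sub_le_dist (σ τ : SigmaSp Ω) (U : Set ℝ) (ω : Ω) :
    |(∫ x in U, ev Ω σ (s x) ω ∂lam01) - ∫ x in U, ev Ω τ (s x) ω ∂lam01| ≤ dist σ τ := by
  have hσ := integrable_ev_comp hs σ ω
  have hτ := integrable_ev_comp hs τ ω
  have hdist : Integrable (fun x => dist (ev Ω σ x) (ev Ω τ x)) lam01 := by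
    simp only [dist_eq_norm]
    exact ((integrable_ev σ).sub (integrable_ev τ)).norm
  calc |(∫ x in U, ev Ω σ (s x) ω ∂lam01) - ∫ x in U, ev Ω τ (s x) ω ∂lam01|
      = |∫ x in U, (ev Ω σ (s x) ω - ev Ω τ (s x) ω) ∂lam01| := by
        rw [integral_sub hσ.integrableOn hτ.integrableOn]
    _ ≤ ∫ x in U, |ev Ω σ (s x) ω - ev Ω τ (s x) ω| ∂lam01 := abs_integral_le_integral_abs
    _ ≤ ∫ x, |ev Ω σ (s x) ω - ev Ω τ (s x) ω| ∂lam01 :=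
        setIntegral_le_integral (hσ.sub hτ).abs (.of_forall fun _ => abs_nonneg _)
    _ ≤ ∫ x, dist (ev Ω σ (s x)) (ev Ω τ (s x)) ∂lam01 :=
        integral_mono (hσ.sub hτ).abs (hs.integrable_comp_of_integrable hdist)
          fun x => dist_le_pi_dist (ev Ω σ (s x)) (ev Ω τ (s x)) ω
    _ = ∫ x, dist (ev Ω σ x) (ev Ω τ x) ∂lam01 := by
        rw [← integral_map hs.aemeasurable (f := fun x => dist (ev Ω σ x) (ev Ω τ x))
          (hs.map_eq.symm ▸ hdist.aestronglyMeasurable), hs.map_eq]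
    _ = dist σ τ := (dist_eq_integral_dist_ev σ τ).symm

end MeasurePreserving

/-- The kernel `((σ, τ), x) ↦ σ_x - τ_{t(x)}` whose cut norm with respect to a coupling is
`cutPair`. -/
def pairDiff (t : ℝ → ℝ) (p : SigmaSp Ω × SigmaSp Ω) (x : ℝ) (ω : Ω) : ℝ :=
  ev Ω p.1 x ω - ev Ω p.2 (t x) ω

section PairDiff

variable {t : ℝ → ℝ} (ht : MeasurePreserving t lam01 lam01)
include ht

theorem setIntegral_pairDiff (p : SigmaSp Ω × SigmaSp Ω) (U : Set ℝ) (ω : Ω) :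
    ∫ x in U, pairDiff t p x ω ∂lam01 =
      (∫ x in U, ev Ω p.1 x ω ∂lam01) - ∫ x in U, ev Ω p.2 (t x) ω ∂lam01 :=
  integral_sub (integrable_ev_comp (.id _) p.1 ω).integrableOn
    (integrable_ev_comp ht p.2 ω).integrableOn

theorem abs_setIntegral_pairDiff_sub_le (p q : SigmaSp Ω × SigmaSp Ω) (U : Set ℝ) (ω : Ω) :
    |(∫ x in U, pairDiff t p x ω ∂lam01) - ∫ x in U, pairDiff t q x ω ∂lam01| ≤
      2 * dist p q := by
  rw [setIntegral_pairDiff ht, setIntegral_pairDiff ht, sub_sub_sub_comm, two_mul]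
  refine (abs_sub _ _).trans (add_le_add ?_ ?_)
  · exact (abs_setIntegral_ev_comp_sub_le_dist (.id _) p.1 q.1 U ω).trans (le_max_left _ _)
  · exact (abs_setIntegral_ev_comp_sub_le_dist ht p.2 q.2 U ω).trans (le_max_right _ _)

theorem isBoundedKernel_pairDiff : IsBoundedKernel lam01 (pairDiff (Ω := Ω) t) where
  measurable_setIntegral U ω := by
    refine (LipschitzWith.of_dist_le_mul (K := 2) fun p q => ?_).continuous.measurable
    exact abs_setIntegral_pairDiff_sub_le ht p q U ω
  exists_bound := by
    refine ⟨1 + 1, fun U ω p => ?_⟩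
    rw [setIntegral_pairDiff ht]
    exact (abs_sub _ _).trans (add_le_add (abs_setIntegral_ev_comp_le_one (.id _) p.1 U ω)
      (abs_setIntegral_ev_comp_le_one ht p.2 U ω))

end PairDiff

end SigmaSp

section Comparison

theorem isMPS_id : IsMPS id := ⟨.id _, mapsTo_id _⟩

instance : Nonempty {s : ℝ → ℝ // IsMPS s} := ⟨⟨id, isMPS_id⟩⟩

theorem ae_lam01_mem_Ico : ∀ᵐ x ∂lam01, x ∈ Ico (0 : ℝ) 1 := ae_restrict_mem measurableSet_Ico

theorem exists_isMPS_ae_eq {s : ℝ → ℝ} (hs : MeasurePreserving s lam01 lam01) :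
    ∃ t, IsMPS t ∧ t =ᵐ[lam01] s := by
  have hfract : Int.fract =ᵐ[lam01] (id : ℝ → ℝ) :=
    ae_lam01_mem_Ico.mono fun x hx => Int.fract_eq_self.2 hx
  have hmp : MeasurePreserving (Int.fract : ℝ → ℝ) lam01 lam01 :=
    ⟨measurable_fract, by rw [Measure.map_congr hfract, Measure.map_id]⟩
  exact ⟨Int.fract ∘ s, ⟨hmp.comp hs, fun x _ => ⟨Int.fract_nonneg _, Int.fract_lt_one _⟩⟩,
    hs.quasiMeasurePreserving.ae_eq hfract⟩

theorem deltaBox_nonneg (f g : ℝ → ℝ → Ω → ℝ) : 0 ≤ deltaBox Ω f g :=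
  Real.iInf_nonneg fun _ => Real.iInf_nonneg fun _ => cutNorm_nonneg _ _ _

theorem deltaBox_le_cutNorm (f g : ℝ → ℝ → Ω → ℝ) {s t : ℝ → ℝ} (hs : IsMPS s) (ht : IsMPS t) :
    deltaBox Ω f g ≤ cutNorm lam01 lam01 fun x y ω => f x y ω - g (s x) (t y) ω :=
  ciInf₂_le_of_nonneg (f := fun (s t : {s : ℝ → ℝ // IsMPS s}) =>
    cutNorm lam01 lam01 fun x y ω => f x y ω - g (s.1 x) (t.1 y) ω)
    (fun _ _ => cutNorm_nonneg _ _ _) ⟨s, hs⟩ ⟨t, ht⟩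

theorem cutd_le_cutPair {μ ν : PM Ω} {γ : Measure (SigmaSp Ω × SigmaSp Ω)}
    (hγ : IsCoupling Ω μ ν γ) {t : ℝ → ℝ} (ht : IsMPS t) : cutd Ω μ ν ≤ cutPair Ω γ t :=
  ciInf₂_le_of_nonneg
    (f := fun (γ : {γ // IsCoupling Ω μ ν γ}) (t : {t // IsMPS t}) => cutPair Ω γ.1 t.1)
    (fun _ _ => cutNorm_nonneg _ _ _) ⟨γ, hγ⟩ ⟨t, ht⟩

variable {μ ν : PM Ω} {φ ξ : ℝ → SigmaSp Ω}

theorem cutPair_eq_cutNorm_of_measurePreserving {Ψ : ℝ → SigmaSp Ω × SigmaSp Ω}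
    {γ : Measure (SigmaSp Ω × SigmaSp Ω)}
    (hΨ : MeasurePreserving Ψ lam01 γ) {t : ℝ → ℝ} (ht : MeasurePreserving t lam01 lam01) :
    cutPair Ω γ t = cutNorm lam01 lam01 fun x => pairDiff t (Ψ x) :=
  (cutNorm_comp hΨ (isBoundedKernel_pairDiff ht)).symm

theorem IsRep.isCoupling_map (hφ : IsRep Ω μ φ) (hξ : IsRep Ω ν ξ) {s : ℝ → ℝ}
    (hs : MeasurePreserving s lam01 lam01) :
    IsCoupling Ω μ ν (lam01.map fun x => (φ x, ξ (s x))) := by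
  have hmeas : Measurable fun x => (φ x, ξ (s x)) := hφ.1.prodMk (hξ.1.comp hs.measurable)
  refine ⟨?_, ?_⟩
  · rw [Measure.map_map measurable_fst hmeas]
    exact hφ.2
  · rw [Measure.map_map measurable_snd hmeas, ← hξ.2, ← hs.map_eq,
      Measure.map_map hξ.1 hs.measurable, hs.map_eq]
    rfl

theorem cutd_le_deltaBox (hφ : IsRep Ω μ φ) (hξ : IsRep Ω ν ξ) :
    cutd Ω μ ν ≤ deltaBox Ω (graphonOf Ω φ) (graphonOf Ω ξ) := by
  refine le_ciInf fun ⟨s, hs⟩ => le_ciInf fun ⟨t, ht⟩ => ?_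
  refine (cutd_le_cutPair (hφ.isCoupling_map hξ hs.1) ht).trans_eq ?_
  exact cutPair_eq_cutNorm_of_measurePreserving ⟨hφ.1.prodMk (hξ.1.comp hs.1.measurable), rfl⟩ ht.1

theorem deltaBox_le_cutPair_add (hφ : IsRep Ω μ φ) (hξ : IsRep Ω ν ξ)
    {γ : Measure (SigmaSp Ω × SigmaSp Ω)} (hγ : IsCoupling Ω μ ν γ) {t : ℝ → ℝ} (ht : IsMPS t)
    {ε : ℝ} (hε : 0 < ε) :
    deltaBox Ω (graphonOf Ω φ) (graphonOf Ω ξ) ≤ cutPair Ω γ t + Fintype.card Ω * ε := by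
  have : Nonempty (SigmaSp Ω) := ⟨φ 0⟩
  obtain ⟨Ψ, s', hΨ, hs', hdist⟩ := exists_measurePreserving_coupling_dist_lt hφ.1 hξ.1
    (hγ.1.trans hφ.2.symm) (hγ.2.trans hξ.2.symm) hε
  obtain ⟨s, hs, hss'⟩ := exists_isMPS_ae_eq hs'
  have hΦ : Measurable fun x => (φ x, ξ (s x)) := hφ.1.prodMk (hξ.1.comp hs.1.measurable)
  have hker := isBoundedKernel_pairDiff (Ω := Ω) ht.1
  have hclose : ∀ᵐ x ∂lam01, ∀ V ω, |(∫ y in V, pairDiff t (φ x, ξ (s x)) y ω ∂lam01) -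
      ∫ y in V, pairDiff t (Ψ x) y ω ∂lam01| ≤ 2 * ε := by
    filter_upwards [hdist, hss'] with x hx hsx V ω
    rw [hsx]
    exact (abs_setIntegral_pairDiff_sub_le ht.1 _ _ V ω).trans (by gcongr)
  calc deltaBox Ω (graphonOf Ω φ) (graphonOf Ω ξ)
      ≤ cutNorm lam01 lam01 fun x => pairDiff t (φ x, ξ (s x)) := deltaBox_le_cutNorm _ _ hs ht
    _ ≤ (cutNorm lam01 lam01 fun x => pairDiff t (Ψ x)) +
          Fintype.card Ω * (2 * ε * lam01.real univ) / 2 :=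
        cutNorm_le_add (hker.comp hΦ) (hker.comp hΨ.measurable) (by positivity) hclose
    _ = cutPair Ω γ t + Fintype.card Ω * ε := by
        rw [cutPair_eq_cutNorm_of_measurePreserving hΨ ht.1, probReal_univ]; ring

theorem deltaBox_le_cutPair (hφ : IsRep Ω μ φ) (hξ : IsRep Ω ν ξ)
    {γ : Measure (SigmaSp Ω × SigmaSp Ω)} (hγ : IsCoupling Ω μ ν γ) {t : ℝ → ℝ} (ht : IsMPS t) :
    deltaBox Ω (graphonOf Ω φ) (graphonOf Ω ξ) ≤ cutPair Ω γ t := by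
  refine le_of_forall_pos_le_add fun η hη => ?_
  obtain ⟨ε, hε, hεη⟩ := exists_pos_mul_lt hη (Fintype.card Ω)
  exact (deltaBox_le_cutPair_add hφ hξ hγ ht hε).trans (by gcongr)

theorem isCoupling_prod (μ ν : PM Ω) :
    IsCoupling Ω μ ν ((μ : Measure (SigmaSp Ω)).prod (ν : Measure (SigmaSp Ω))) :=
  ⟨Measure.fst_prod, Measure.snd_prod⟩

theorem cutd_eq_deltaBox (hφ : IsRep Ω μ φ) (hξ : IsRep Ω ν ξ) :
    cutd Ω μ ν = deltaBox Ω (graphonOf Ω φ) (graphonOf Ω ξ) := by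
  have : Nonempty {γ // IsCoupling Ω μ ν γ} := ⟨⟨_, isCoupling_prod μ ν⟩⟩
  exact le_antisymm (cutd_le_deltaBox hφ hξ) <|
    le_ciInf fun γ => le_ciInf fun t => deltaBox_le_cutPair hφ hξ γ.2 t.2

end Comparison

section Representation

theorem exists_isRep (μ : PM Ω) : ∃ φ : ℝ → SigmaSp Ω, IsRep Ω μ φ := by
  have : Nonempty (SigmaSp Ω) := nonempty_of_isProbabilityMeasure (μ : Measure (SigmaSp Ω))
  obtain ⟨φ, hφ⟩ := exists_measurePreserving_of_measure_univ_eq lam01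
    (μ : Measure (SigmaSp Ω)) (by simp only [measure_univ])
  exact ⟨φ, hφ.measurable, hφ.map_eq⟩

theorem measurable_of_forall_measurable_dist {X Z : Type*} [MeasurableSpace X]
    [PseudoMetricSpace Z] [SecondCountableTopology Z] [MeasurableSpace Z] [BorelSpace Z]
    {f : X → Z} (hf : ∀ c, Measurable fun x => dist (f x) c) : Measurable f := by
  have hbasis :
      TopologicalSpace.IsTopologicalBasis {B | ∃ (c : Z) (r : ℝ), Metric.ball c r = B} :=
    TopologicalSpace.isTopologicalBasis_of_isOpen_of_nhds
      (by rintro _ ⟨c, r, rfl⟩; exact Metric.isOpen_ball) fun z U hz hU =>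
        let ⟨r, hr, hrU⟩ := Metric.isOpen_iff.1 hU z hz
        ⟨_, ⟨z, r, rfl⟩, Metric.mem_ball_self hr, hrU⟩
  borelize Z
  rw [hbasis.borel_eq_generateFrom]
  refine measurable_generateFrom ?_
  rintro _ ⟨c, r, rfl⟩
  exact measurableSet_lt (hf c) measurable_const

theorem exists_measurable_ev_ae_eq {X : Type*} [MeasurableSpace X] {G : X → ℝ → Ω → ℝ}
    (hG : Measurable (Function.uncurry G)) (hmem : ∀ x, ∀ᵐ y ∂lam01, G x y ∈ simplex Ω) :
    ∃ φ : X → SigmaSp Ω, Measurable φ ∧ ∀ x, ev Ω (φ x) =ᵐ[lam01] G x := by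
  have hLp (x : X) : MemLp (G x) 1 lam01 :=
    .of_bound (hG.comp measurable_prodMk_left).aestronglyMeasurable 1 <|
      (hmem x).mono fun y hy =>
        (pi_norm_le_iff_of_nonneg zero_le_one).2 (abs_le_one_of_mem_simplex hy)
  let φ (x : X) : SigmaSp Ω := ⟨(hLp x).toLp (G x), by
    filter_upwards [(hLp x).coeFn_toLp, hmem x] with y hy hGy
    rwa [hy]⟩
  have hφ (x : X) : ev Ω (φ x) =ᵐ[lam01] G x := (hLp x).coeFn_toLp
  refine ⟨φ, measurable_of_forall_measurable_dist fun σ => ?_, hφ⟩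
  have hdist (x : X) : dist (φ x) σ = ∫ y, dist (G x y) (ev Ω σ y) ∂lam01 := by
    rw [dist_eq_integral_dist_ev]
    exact integral_congr_ae ((hφ x).mono fun y hy => congrArg (dist · (ev Ω σ y)) hy)
  have hσ : Measurable (ev Ω σ) := (Lp.stronglyMeasurable σ.1).measurable
  have hjoint : StronglyMeasurable (Function.uncurry fun x y => dist (G x y) (ev Ω σ y)) :=
    (hG.dist (hσ.comp measurable_snd)).stronglyMeasurable
  simpa only [hdist] using hjoint.integral_prod_right.measurable

theorem deltaBox_eq_zero_of_ae_eq {f g : ℝ → ℝ → Ω → ℝ}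
    (h : ∀ᵐ x ∂lam01, f x =ᵐ[lam01] g x) : deltaBox Ω f g = 0 := by
  refine le_antisymm ((deltaBox_le_cutNorm f g isMPS_id isMPS_id).trans ?_) (deltaBox_nonneg f g)
  refine cutNorm_le le_rfl fun U V _ _ => ?_
  have hzero (ω : Ω) : ∫ x in U, (∫ y in V, (f x y ω - g x y ω) ∂lam01) ∂lam01 = 0 := by
    refine integral_eq_zero_of_ae (ae_restrict_of_ae (h.mono fun x hx => ?_))
    refine integral_eq_zero_of_ae (ae_restrict_of_ae (hx.mono fun y hy => ?_))
    simp [hy]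
  simp [hzero, tv]

theorem exists_isRep_deltaBox_eq_zero {g : ℝ → ℝ → Ω → ℝ} (hg : IsGraphon Ω g) :
    ∃ (μ : PM Ω) (φ : ℝ → SigmaSp Ω), IsRep Ω μ φ ∧ deltaBox Ω (graphonOf Ω φ) g = 0 := by
  have hfract (x : ℝ) : Int.fract x ∈ Ico (0 : ℝ) 1 := ⟨Int.fract_nonneg x, Int.fract_lt_one x⟩
  have hext : Measurable (Function.uncurry fun x => g (Int.fract x)) :=
    hg.1.comp ((measurable_fract.comp measurable_fst).prodMk measurable_snd)
  obtain ⟨φ, hφ, hφg⟩ := exists_measurable_ev_ae_eq hext fun x =>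
    ae_lam01_mem_Ico.mono fun y hy => hg.2 _ (hfract x) y hy
  refine ⟨⟨lam01.map φ, Measure.isProbabilityMeasure_map hφ.aemeasurable⟩, φ, ⟨hφ, rfl⟩,
    deltaBox_eq_zero_of_ae_eq (ae_lam01_mem_Ico.mono fun x hx => ?_)⟩
  exact (hφg x).trans (.of_eq (by rw [Int.fract_eq_self.2 hx]))

end Representation

/-- Proposition: `𝓜_Ω ≅ 𝒲_Ω`. The map sending the `cut□`-class of
`μ ∈ P(Σ_Ω)` to the `δ_□`-class of the graphon `w_μ(x,y) = (φ(x))(y)` (for any measurable `φ`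
with `μ = φ(λ)`) is a well-defined homeomorphism from `𝓜_Ω` to `𝒲_Ω`. Unfolded to the level of
representatives this says: representatives exist; the map is well defined and injective on
`cut□`-classes; it is surjective onto `δ_□`-classes of graphons; and it is continuous with
continuous inverse (in the pseudometrics `cut□`, `δ_□`). -/
theorem homeomorphism_measures_to_graphons (Ω : Type) [Fintype Ω] :
    -- every `μ` admits a representative `φ`
    (∀ μ : PM Ω, ∃ φ : ℝ → SigmaSp Ω, IsRep Ω μ φ) ∧
    -- the induced map on classes is well defined and injective
    (∀ (μ ν : PM Ω) (φ ξ : ℝ → SigmaSp Ω), IsRep Ω μ φ → IsRep Ω ν ξ →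
      (cutd Ω μ ν = 0 ↔ deltaBox Ω (graphonOf Ω φ) (graphonOf Ω ξ) = 0)) ∧
    -- it is surjective onto the classes of graphons
    (∀ g : ℝ → ℝ → Ω → ℝ, IsGraphon Ω g →
      ∃ (μ : PM Ω) (φ : ℝ → SigmaSp Ω), IsRep Ω μ φ ∧ deltaBox Ω (graphonOf Ω φ) g = 0) ∧
    -- it is continuous
    (∀ (μ : PM Ω) (φ : ℝ → SigmaSp Ω), IsRep Ω μ φ → ∀ ε : ℝ, 0 < ε → ∃ δ : ℝ, 0 < δ ∧
      ∀ (ν : PM Ω) (ξ : ℝ → SigmaSp Ω), IsRep Ω ν ξ →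
        cutd Ω μ ν < δ → deltaBox Ω (graphonOf Ω φ) (graphonOf Ω ξ) < ε) ∧
    -- and its inverse is continuous
    (∀ (μ : PM Ω) (φ : ℝ → SigmaSp Ω), IsRep Ω μ φ → ∀ ε : ℝ, 0 < ε → ∃ δ : ℝ, 0 < δ ∧
      ∀ (ν : PM Ω) (ξ : ℝ → SigmaSp Ω), IsRep Ω ν ξ →
        deltaBox Ω (graphonOf Ω φ) (graphonOf Ω ξ) < δ → cutd Ω μ ν < ε) := by
  refine ⟨exists_isRep, fun μ ν φ ξ hφ hξ => by rw [cutd_eq_deltaBox hφ hξ],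
    fun g hg => exists_isRep_deltaBox_eq_zero hg,
    fun μ φ hφ ε hε => ⟨ε, hε, fun ν ξ hξ h => ?_⟩,
    fun μ φ hφ ε hε => ⟨ε, hε, fun ν ξ hξ h => ?_⟩⟩
  · rwa [← cutd_eq_deltaBox hφ hξ]
  · rwa [cutd_eq_deltaBox hφ hξ]

end Paper
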